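/- arXiv:2112.06518 — 2 statements merged into one kernel-verified Lean document; each statement's English description precedes it below -/
import Mathlib

section
/- Let d_1, d_2 be positive integers and p, q > 0. For i ∈ [M], let A_i ⊆ ℝ^{d_1} and B_i ⊆ ℝ^{d_2} be nonempty compact sets, and let β_S ≥ 0 (S ⊆ [M]) be nonnegative numbers. Assume |Σ_{i∈[M]} A_i|^{1/p} ≥ Σ_S β_S |Σ_{i∈S} A_i|^{1/p} and |Σ_{i∈[M]} B_i|^{1/q} ≥ Σ_S β_S |Σ_{i∈S} B_i|^{1/q}, where the volumes are d_1- and d_2-dimensional Lebesgue measure respectively. Then the Cartesian product sets A_i × B_i ⊆ ℝ^{d_1+d_2} satisfy |Σ_{i∈[M]} (A_i × B_i)|^{1/(p+q)} ≥ Σ_S β_S |Σ_{i∈S} (A_i × B_i)|^{1/(p+q)}, with (d_1+d_2)-dimensional Lebesgue measure. -/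
open Pointwise MeasureTheory

/-!
Minkowski sums commute with Cartesian products, so the volume of each sumset of the `A i ×ˢ B i`
is the product of the volumes of the sumsets of the factors. Hölder's inequality with conjugate
exponents `(p + q) / p` and `(p + q) / q` then multiplies the two superadditivity inequalities.
-/

open scoped ENNReal

section Minkowski

variable {ι E F : Type*} [AddCommMonoid E] [AddCommMonoid F]

lemma sum_prod_eq_prod_sum (A : ι → Set E) (B : ι → Set F) (S : Finset ι) :
    ∑ i ∈ S, A i ×ˢ B i = (∑ i ∈ S, A i) ×ˢ (∑ i ∈ S, B i) := by
  classical
  induction S using Finset.induction_on with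
  | empty => exact Set.zero_prod_zero.symm
  | insert i S hi ih => simp only [Finset.sum_insert hi, ih, Set.prod_add_prod_comm]

lemma measure_prod_sum_prod [MeasurableSpace E] [MeasurableSpace F]
    (μ : Measure E) (ν : Measure F) [SFinite ν] (A : ι → Set E) (B : ι → Set F) (S : Finset ι) :
    μ.prod ν (∑ i ∈ S, A i ×ˢ B i) = μ (∑ i ∈ S, A i) * ν (∑ i ∈ S, B i) := by
  rw [sum_prod_eq_prod_sum, Measure.prod_prod]

lemma isCompact_finset_sum [TopologicalSpace E] [ContinuousAdd E] {A : ι → Set E} {S : Finset ι}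
    (hA : ∀ i ∈ S, IsCompact (A i)) : IsCompact (∑ i ∈ S, A i) :=
  Finset.sum_induction A IsCompact (fun _ _ => IsCompact.add) isCompact_singleton hA

end Minkowski

section Holder

variable {κ : Type*} (s : Finset κ)

lemma sum_rpow_mul_rpow_le_rpow_sum_mul_rpow_sum (f g : κ → ℝ≥0∞) {a b : ℝ}
    (ha : 0 < a) (hb : 0 < b) (hab : a + b = 1) :
    ∑ k ∈ s, f k ^ a * g k ^ b ≤ (∑ k ∈ s, f k) ^ a * (∑ k ∈ s, g k) ^ b := by
  simpa only [one_div, inv_inv, ENNReal.rpow_rpow_inv ha.ne', ENNReal.rpow_rpow_inv hb.ne'] using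
    ENNReal.inner_le_Lp_mul_Lq s (fun k => f k ^ a) (fun k => g k ^ b)
      (Real.HolderConjugate.inv_inv ha hb hab)

lemma mul_rpow_eq_rpow_mul_rpow {p q : ℝ} (hp : 0 < p) (hq : 0 < q) (w x y : ℝ≥0∞) :
    w * (x * y) ^ (1 / (p + q)) =
      (w * x ^ (1 / p)) ^ (p / (p + q)) * (w * y ^ (1 / q)) ^ (q / (p + q)) := by
  have hθp : 0 ≤ p / (p + q) := by positivity
  have hθq : 0 ≤ q / (p + q) := by positivity
  have hw : w ^ (p / (p + q)) * w ^ (q / (p + q)) = w := by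
    rw [← ENNReal.rpow_add_of_nonneg _ _ hθp hθq, ← add_div, div_self (by positivity),
      ENNReal.rpow_one]
  have hexp {r : ℝ} (hr : 0 < r) : 1 / r * (r / (p + q)) = 1 / (p + q) := by field_simp
  rw [ENNReal.mul_rpow_of_nonneg _ _ hθp, ENNReal.mul_rpow_of_nonneg _ _ hθq,
    ← ENNReal.rpow_mul, ← ENNReal.rpow_mul, hexp hp, hexp hq, mul_mul_mul_comm, hw,
    ENNReal.mul_rpow_of_nonneg _ _ (by positivity)]

lemma sum_mul_rpow_mul_le_rpow_mul {p q : ℝ} (hp : 0 < p) (hq : 0 < q) {w x y : κ → ℝ≥0∞}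
    {X Y : ℝ≥0∞} (hx : ∑ k ∈ s, w k * x k ^ (1 / p) ≤ X ^ (1 / p))
    (hy : ∑ k ∈ s, w k * y k ^ (1 / q) ≤ Y ^ (1 / q)) :
    ∑ k ∈ s, w k * (x k * y k) ^ (1 / (p + q)) ≤ (X * Y) ^ (1 / (p + q)) :=
  calc
    ∑ k ∈ s, w k * (x k * y k) ^ (1 / (p + q))
      = ∑ k ∈ s, (w k * x k ^ (1 / p)) ^ (p / (p + q)) *
          (w k * y k ^ (1 / q)) ^ (q / (p + q)) := by
        simp only [mul_rpow_eq_rpow_mul_rpow hp hq]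
    _ ≤ (∑ k ∈ s, w k * x k ^ (1 / p)) ^ (p / (p + q)) *
          (∑ k ∈ s, w k * y k ^ (1 / q)) ^ (q / (p + q)) :=
        sum_rpow_mul_rpow_le_rpow_sum_mul_rpow_sum s _ _ (by positivity) (by positivity)
          (by field_simp)
    _ ≤ (X ^ (1 / p)) ^ (p / (p + q)) * (Y ^ (1 / q)) ^ (q / (p + q)) := by gcongr
    _ = (X * Y) ^ (1 / (p + q)) := by
        simpa only [one_mul] using (mul_rpow_eq_rpow_mul_rpow hp hq 1 X Y).symm

lemma sum_ofReal_mul_rpow_le_rpow_iff {w : κ → ℝ} (hw : ∀ k ∈ s, 0 ≤ w k) {x : κ → ℝ≥0∞}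
    (hx : ∀ k ∈ s, x k ≠ ∞) {X : ℝ≥0∞} (hX : X ≠ ∞) {r : ℝ} (hr : 0 ≤ r) :
    ∑ k ∈ s, ENNReal.ofReal (w k) * x k ^ r ≤ X ^ r ↔
      ∑ k ∈ s, w k * (x k).toReal ^ r ≤ X.toReal ^ r := by
  have ofReal_toReal_rpow {z : ℝ≥0∞} (hz : z ≠ ∞) : ENNReal.ofReal (z.toReal ^ r) = z ^ r := by
    rw [ENNReal.toReal_rpow, ENNReal.ofReal_toReal (ENNReal.rpow_ne_top_of_nonneg hr hz)]
  have ofReal_sum : ENNReal.ofReal (∑ k ∈ s, w k * (x k).toReal ^ r) =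
      ∑ k ∈ s, ENNReal.ofReal (w k) * x k ^ r := by
    rw [ENNReal.ofReal_sum_of_nonneg fun k hk => mul_nonneg (hw k hk) (by positivity)]
    refine Finset.sum_congr rfl fun k hk => ?_
    rw [ENNReal.ofReal_mul (hw k hk), ofReal_toReal_rpow (hx k hk)]
  rw [← ofReal_sum, ← ofReal_toReal_rpow hX, ENNReal.ofReal_le_ofReal_iff (by positivity)]

end Holder

lemma sum_ofReal_mul_measure_sum_rpow_le_rpow_iff
    {ι E : Type*} [AddCommMonoid E] [TopologicalSpace E] [ContinuousAdd E] [MeasurableSpace E]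
    (μ : Measure E) [IsFiniteMeasureOnCompacts μ] {C : ι → Set E} (hC : ∀ i, IsCompact (C i))
    {β : Finset ι → ℝ} (hβ : ∀ S, 0 ≤ β S) {𝒮 : Finset (Finset ι)} {T : Finset ι}
    {r : ℝ} (hr : 0 ≤ r) :
    ∑ S ∈ 𝒮, ENNReal.ofReal (β S) * μ (∑ i ∈ S, C i) ^ r ≤ μ (∑ i ∈ T, C i) ^ r ↔
      ∑ S ∈ 𝒮, β S * (μ (∑ i ∈ S, C i)).toReal ^ r ≤ (μ (∑ i ∈ T, C i)).toReal ^ r := by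
  have measure_ne_top (S : Finset ι) : μ (∑ i ∈ S, C i) ≠ ∞ :=
    (isCompact_finset_sum fun i _ => hC i).measure_ne_top
  exact sum_ofReal_mul_rpow_le_rpow_iff 𝒮 (fun S _ => hβ S) (fun S _ => measure_ne_top S)
    (measure_ne_top T) hr

-- Stated in `ℝ≥0∞` because `toReal` would replace infinite measures by `0`.
theorem fractional_superadditivity_cartesian_product_general
    {ι E F : Type*} [AddCommMonoid E] [AddCommMonoid F] [MeasurableSpace E] [MeasurableSpace F]
    (μ : Measure E) (ν : Measure F) [SFinite ν] {p q : ℝ} (hp : 0 < p) (hq : 0 < q)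
    (A : ι → Set E) (B : ι → Set F) (𝒮 : Finset (Finset ι)) (T : Finset ι)
    (β : Finset ι → ℝ≥0∞)
    (hA : ∑ S ∈ 𝒮, β S * μ (∑ i ∈ S, A i) ^ (1 / p) ≤ μ (∑ i ∈ T, A i) ^ (1 / p))
    (hB : ∑ S ∈ 𝒮, β S * ν (∑ i ∈ S, B i) ^ (1 / q) ≤ ν (∑ i ∈ T, B i) ^ (1 / q)) :
    ∑ S ∈ 𝒮, β S * μ.prod ν (∑ i ∈ S, A i ×ˢ B i) ^ (1 / (p + q))
      ≤ μ.prod ν (∑ i ∈ T, A i ×ˢ B i) ^ (1 / (p + q)) := by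
  simpa only [measure_prod_sum_prod] using sum_mul_rpow_mul_le_rpow_mul 𝒮 hp hq hA hB

/-- Lemma `lem:cartes`: combining fractional superadditivity statements for volumes
through Cartesian products. -/
theorem fractional_superadditivity_cartesian_product
    (M d₁ d₂ : ℕ) (hM : 1 ≤ M) (hd₁ : 0 < d₁) (hd₂ : 0 < d₂)
    (p q : ℝ) (hp : 0 < p) (hq : 0 < q)
    (A : Fin M → Set (Fin d₁ → ℝ)) (B : Fin M → Set (Fin d₂ → ℝ))
    (hAne : ∀ i, (A i).Nonempty) (hAcpt : ∀ i, IsCompact (A i))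
    (hBne : ∀ i, (B i).Nonempty) (hBcpt : ∀ i, IsCompact (B i))
    (β : Finset (Fin M) → ℝ)
    (hβ : ∀ S : Finset (Fin M), 0 ≤ β S)
    (hA : ∑ S : Finset (Fin M), β S * (volume (∑ i ∈ S, A i)).toReal ^ (1 / p)
      ≤ (volume (∑ i : Fin M, A i)).toReal ^ (1 / p))
    (hB : ∑ S : Finset (Fin M), β S * (volume (∑ i ∈ S, B i)).toReal ^ (1 / q)
      ≤ (volume (∑ i : Fin M, B i)).toReal ^ (1 / q)) :
    ∑ S : Finset (Fin M), β S * (volume (∑ i ∈ S, (A i ×ˢ B i))).toReal ^ (1 / (p + q))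
      ≤ (volume (∑ i : Fin M, (A i ×ˢ B i))).toReal ^ (1 / (p + q)) := by
  have hABcpt (i : Fin M) : IsCompact (A i ×ˢ B i) := (hAcpt i).prod (hBcpt i)
  rw [← sum_ofReal_mul_measure_sum_rpow_le_rpow_iff _ hAcpt hβ (by positivity)] at hA
  rw [← sum_ofReal_mul_measure_sum_rpow_le_rpow_iff _ hBcpt hβ (by positivity)] at hB
  rw [← sum_ofReal_mul_measure_sum_rpow_le_rpow_iff _ hABcpt hβ (by positivity)]
  exact fractional_superadditivity_cartesian_product_general volume volume hp hq A B _ _ _ hA hB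
end

section
/- Let S_1, …, S_s be subsets of [M] (repetitions allowed) such that every i ∈ [M] belongs to exactly q of them, and let A_1, …, A_M be nonempty compact subsets of ℝ. Then q · |A_1 + ⋯ + A_M| ≥ Σ_{j=1}^s |Σ_{i∈S_j} A_i|. -/
open Pointwise MeasureTheory

/-!
Move a point `x` with `x i ∈ A i` from the minima of the `A i` to their maxima, one coordinate at a
time, and record for every `T` the measure of the part of `∑ i ∈ T, A i` below `∑ i ∈ T, x i`.
This measure starts at `0` and ends at the measure of `∑ i ∈ T, A i`. When the `k`-th coordinate
grows by `d`, it changes only if `k ∈ T`, and then by the measure of the slice of `∑ i ∈ T, A i`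
between `∑ i ∈ T, x i` and `∑ i ∈ T, x i + d`. For `T ⊆ U`, translation by `∑ i ∈ U \ T, x i` moves
that slice into the corresponding slice of `∑ i ∈ U, A i`. So at each step the growth for the full
sum bounds the growth for every `S j` containing `k`, and the weights `w j` of those `S j` add up to
at most `c`; for a cover of multiplicity `q`, take `w = 1` and `c = q`.
-/

open Set Function
open scoped ENNReal NNReal

section Bounds

variable {ι G : Type*} [AddCommMonoid G] [PartialOrder G] [IsOrderedAddMonoid G]
  {A : ι → Set G} {x : ι → G} {T : Finset ι}

lemma finsetSum_mem_lowerBounds (hx : ∀ i ∈ T, x i ∈ lowerBounds (A i)) :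
    ∑ i ∈ T, x i ∈ lowerBounds (∑ i ∈ T, A i) := by
  intro y hy
  obtain ⟨g, hg, rfl⟩ := (mem_finsetSum T A y).1 hy
  exact Finset.sum_le_sum fun i hi ↦ hx i hi (hg hi)

lemma finsetSum_mem_upperBounds (hx : ∀ i ∈ T, x i ∈ upperBounds (A i)) :
    ∑ i ∈ T, x i ∈ upperBounds (∑ i ∈ T, A i) := by
  intro y hy
  obtain ⟨g, hg, rfl⟩ := (mem_finsetSum T A y).1 hy
  exact Finset.sum_le_sum fun i hi ↦ hx i hi (hg hi)

end Bounds

lemma isCompact_finsetSum {ι G : Type*} [AddCommMonoid G] [TopologicalSpace G] [ContinuousAdd G]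
    {A : ι → Set G} {T : Finset ι} (hA : ∀ i ∈ T, IsCompact (A i)) :
    IsCompact (∑ i ∈ T, A i) :=
  Finset.sum_induction A IsCompact (fun _ _ ↦ IsCompact.add) isCompact_singleton hA

lemma measure_inter_Iic_eq_add_Ioc {α : Type*} [LinearOrder α] [TopologicalSpace α]
    [OrderClosedTopology α] [MeasurableSpace α] [OpensMeasurableSpace α] (μ : Measure α)
    (s : Set α) {a b : α} (hab : a ≤ b) :
    μ (s ∩ Iic b) = μ (s ∩ Iic a) + μ (s ∩ Ioc a b) := by
  rw [← measure_inter_add_sdiff (s ∩ Iic b) measurableSet_Iic (t := Iic a), inter_assoc,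
    Iic_inter_Iic, inf_eq_right.2 hab, inter_sdiff_assoc, Iic_sdiff_Iic]

section Slices

variable {ι κ G : Type*} [DecidableEq ι] [AddCommGroup G] [LinearOrder G] [IsOrderedAddMonoid G]
  [MeasurableSpace G] (μ : Measure G) {A : ι → Set G} {x : ι → G}

lemma measure_finsetSum_inter_Iic_update [TopologicalSpace G] [OrderClosedTopology G]
    [OpensMeasurableSpace G] (A : ι → Set G) (T : Finset ι) {k : ι} {b : G} (hb : x k ≤ b) :
    μ ((∑ i ∈ T, A i) ∩ Iic (∑ i ∈ T, update x k b i)) =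
      μ ((∑ i ∈ T, A i) ∩ Iic (∑ i ∈ T, x i)) +
        if k ∈ T then μ ((∑ i ∈ T, A i) ∩ Ioc (∑ i ∈ T, x i) (∑ i ∈ T, x i + (b - x k)))
        else 0 := by
  split_ifs with hk
  · have hsum : ∑ i ∈ T, update x k b i = ∑ i ∈ T, x i + (b - x k) := by
      rw [Finset.sum_update_of_mem hk, Finset.sum_eq_add_sum_sdiff_singleton_of_mem hk x]
      abel
    rw [hsum]
    exact measure_inter_Iic_eq_add_Ioc μ _ (le_add_of_nonneg_right (sub_nonneg.2 hb))
  · rw [Finset.sum_update_of_notMem hk, add_zero]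

variable [MeasurableAdd G] [μ.IsAddLeftInvariant]

lemma measure_finsetSum_inter_Ioc_le_of_subset {T U : Finset ι} (hTU : T ⊆ U)
    (hx : ∀ i ∈ U \ T, x i ∈ A i) (d : G) :
    μ ((∑ i ∈ T, A i) ∩ Ioc (∑ i ∈ T, x i) (∑ i ∈ T, x i + d)) ≤
      μ ((∑ i ∈ U, A i) ∩ Ioc (∑ i ∈ U, x i) (∑ i ∈ U, x i + d)) := by
  rw [← measure_preimage_add μ (∑ i ∈ U \ T, x i) ((∑ i ∈ U, A i) ∩ _)]
  refine measure_mono fun y ⟨hyA, hyl, hyr⟩ ↦ ⟨?_, ?_, ?_⟩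
  · rw [← Finset.sum_sdiff hTU]
    exact add_mem_add (finsetSum_mem_finsetSum _ _ _ hx) hyA
  · rw [← Finset.sum_sdiff hTU]
    exact add_lt_add_right hyl _
  · rw [← Finset.sum_sdiff hTU, add_assoc]
    exact add_le_add_right hyr _

variable [TopologicalSpace G] [OrderClosedTopology G] [OpensMeasurableSpace G] [Fintype ι]
  [Fintype κ] {S : κ → Finset ι} {w : κ → ℝ≥0∞} {c : ℝ≥0∞}

lemma sum_mul_measure_inter_Iic_update_le {k : ι} {b : G} (hc : ∑ j with k ∈ S j, w j ≤ c)
    (hx : ∀ i, x i ∈ A i) (hb : x k ≤ b)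
    (hle : ∑ j, w j * μ ((∑ i ∈ S j, A i) ∩ Iic (∑ i ∈ S j, x i)) ≤
      c * μ ((∑ i, A i) ∩ Iic (∑ i, x i))) :
    ∑ j, w j * μ ((∑ i ∈ S j, A i) ∩ Iic (∑ i ∈ S j, update x k b i)) ≤
      c * μ ((∑ i, A i) ∩ Iic (∑ i, update x k b i)) := by
  let slice (T : Finset ι) : ℝ≥0∞ :=
    μ ((∑ i ∈ T, A i) ∩ Ioc (∑ i ∈ T, x i) (∑ i ∈ T, x i + (b - x k)))
  have hslice : ∑ j with k ∈ S j, w j * slice (S j) ≤ c * slice Finset.univ := calc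
    _ ≤ ∑ j with k ∈ S j, w j * slice Finset.univ := by
      gcongr
      exact measure_finsetSum_inter_Ioc_le_of_subset μ (Finset.subset_univ _) (fun i _ ↦ hx i) _
    _ = (∑ j with k ∈ S j, w j) * slice Finset.univ := (Finset.sum_mul ..).symm
    _ ≤ c * slice Finset.univ := by gcongr
  simp only [measure_finsetSum_inter_Iic_update μ A _ hb, mul_add, Finset.sum_add_distrib,
    mul_ite, mul_zero, ← Finset.sum_filter, Finset.mem_univ, if_true]
  exact add_le_add hle hslice

variable [NullSingletonClass μ]

theorem sum_mul_measure_finsetSum_le (hc : ∀ i, ∑ j with i ∈ S j, w j ≤ c) {a b : ι → G}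
    (ha : ∀ i, IsLeast (A i) (a i)) (hb : ∀ i, IsGreatest (A i) (b i)) :
    ∑ j, w j * μ (∑ i ∈ S j, A i) ≤ c * μ (∑ i, A i) := by
  have hmove (T : Finset ι) :
      ∑ j, w j * μ ((∑ i ∈ S j, A i) ∩ Iic (∑ i ∈ S j, T.piecewise b a i)) ≤
        c * μ ((∑ i, A i) ∩ Iic (∑ i, T.piecewise b a i)) := by
    induction T using Finset.induction_on with
    | empty =>
      have hzero (U : Finset ι) : μ ((∑ i ∈ U, A i) ∩ Iic (∑ i ∈ U, a i)) = 0 :=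
        Set.Subsingleton.measure_zero (subsingleton_singleton.anti fun y hy ↦
          hy.2.antisymm (finsetSum_mem_lowerBounds (fun i _ ↦ (ha i).2) hy.1)) μ
      simp [hzero]
    | insert k T _ ih =>
      rw [Finset.piecewise_insert]
      have hmem (i : ι) : T.piecewise b a i ∈ A i :=
        T.piecewise_cases b a (· ∈ A i) (hb i).1 (ha i).1
      exact sum_mul_measure_inter_Iic_update_le μ (hc k) hmem ((hb k).2 (hmem k)) ih
  have hfull (T : Finset ι) : (∑ i ∈ T, A i) ∩ Iic (∑ i ∈ T, b i) = ∑ i ∈ T, A i :=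
    inter_eq_left.2 (finsetSum_mem_upperBounds fun i _ ↦ (hb i).2)
  simpa only [Finset.piecewise_univ, hfull] using hmove Finset.univ

theorem regular_cover_superadditivity_general {w : κ → ℝ≥0} {c : ℝ≥0}
    (hc : ∀ i, ∑ j with i ∈ S j, w j ≤ c) {a b : ι → G} (ha : ∀ i, IsLeast (A i) (a i))
    (hb : ∀ i, IsGreatest (A i) (b i)) (hfin : μ (∑ i, A i) ≠ ∞) :
    ∑ j, w j * μ.real (∑ i ∈ S j, A i) ≤ c * μ.real (∑ i, A i) := by
  have hle : ∑ j, (w j : ℝ≥0∞) * μ (∑ i ∈ S j, A i) ≤ c * μ (∑ i, A i) :=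
    sum_mul_measure_finsetSum_le μ (fun i ↦ mod_cast hc i) ha hb
  have hright : c * μ (∑ i, A i) ≠ ∞ := ENNReal.mul_ne_top ENNReal.coe_ne_top hfin
  have hleft := ENNReal.sum_ne_top.1 (ne_top_of_le_ne_top hright hle)
  simpa [ENNReal.toReal_sum hleft, measureReal_def] using ENNReal.toReal_mono hright hle

end Slices

/-- The regular-covering form of fractional superadditivity on the real line:
if the sequence `S_1, …, S_s` covers `[M]` exactly `q` times, then
`q·|A_1 + ⋯ + A_M| ≥ Σ_j |Σ_{i ∈ S_j} A_i|`. -/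
theorem regular_cover_superadditivity
    (M s q : ℕ) (hM : 1 ≤ M)
    (S : Fin s → Finset (Fin M))
    (hcover : ∀ i : Fin M, (Finset.univ.filter (fun j => i ∈ S j)).card = q)
    (A : Fin M → Set ℝ)
    (hne : ∀ i, (A i).Nonempty)
    (hcpt : ∀ i, IsCompact (A i)) :
    ∑ j : Fin s, (volume (∑ i ∈ S j, A i)).toReal
      ≤ (q : ℝ) * (volume (∑ i : Fin M, A i)).toReal := by
  simpa [measureReal_def] using regular_cover_superadditivity_general volume (w := 1) (c := q)
    (by simp [hcover]) (fun i ↦ (hcpt i).isLeast_sInf (hne i))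
    (fun i ↦ (hcpt i).isGreatest_sSup (hne i))
    (isCompact_finsetSum fun i _ ↦ hcpt i).measure_ne_top
end
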